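/- arXiv:2104.03482 — 2 statements merged into one kernel-verified Lean document; each statement's English description precedes it below -/
import Mathlib

section
/- Let G and H be disjoint finite simple connected graphs, where G has n ≥ 3 vertices and m edges, H has n₁ vertices and m₁ edges, and G is not isomorphic to the star Sₙ. Then Lξᶜ(G ⊻ H) = m(3m + 5) + 2n₁(n₁ + 3n − 1) − 4m₁ − (n + n₁ − 1)·|V_e^1(G)|, where V_e^1(G) is the set of vertices of G with eccentricity 1 (i.e., vertices adjacent to all other vertices of G). -/
/-!
Every distance in `G ⊻ H` is computed exactly, by exhibiting a level function and checking that it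
satisfies the local conditions characterising the distance from a fixed vertex
(`dist_eq_of_level`). Since `G` has no isolated vertex, the outcome is as follows.

* From an original vertex `v`: distance `1` to the incident edges, `2` to the neighbours of `v` in
  `G` and to all of `H`, `3` to the other edges and `4` to the other vertices of `G`. Hence
  `d₂ = deg v + n₁`, and the eccentricity is `4` unless `v` is adjacent to all other vertices of
  `G`; in that case it is `3`, because `G` is not a star and so some edge avoids `v`
  (`star_of_center`).
* From an edge `e`: distance `1` to its ends and to `H`, `2` to the other edges and `3` to the
  other vertices of `G`, which exist as `n ≥ 3`. Hence `d₂ = m - 1` and the eccentricity is `3`.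
* From a vertex `w` of `H`: distance `1` to its neighbours in `H` and to all edges of `G`, and `2`
  to everything else. Hence `d₂ = n + n₁ - 1 - deg w` and the eccentricity is `2`.

Summing `d₂ · e` over the three classes and using the handshake lemma in `G` and in `H` gives the
formula; a vertex of eccentricity `1` in `G` has `d₂ = n - 1 + n₁` and contributes `3 · d₂` instead
of `4 · d₂`, whence the last term.
-/

/-!
Definitions for the leap eccentric connectivity index of graph operations with
subdivided edges (Song–Tang).
-/

open SimpleGraph Finset
open scoped Classical

noncomputable section

instance edgeSetFintypeOfFintype {V : Type*} [Fintype V] (G : SimpleGraph V) :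
    Fintype G.edgeSet :=
  Set.Finite.fintype (Set.toFinite _)

/-- Eccentricity `e(v|X)` of a vertex: the maximum distance from `v` to a vertex of `X`. -/
def ecc {V : Type*} [Fintype V] (X : SimpleGraph V) (v : V) : ℕ :=
  Finset.univ.sup (fun u => X.dist v u)

/-- `d₁(v|X)`: the degree of `v`. -/
def deg1 {V : Type*} [Fintype V] (X : SimpleGraph V) (v : V) : ℕ :=
  (Finset.univ.filter (fun u => X.Adj v u)).card

/-- `d₂(v|X)`: the second degree of `v`, the number of vertices at distance exactly 2. -/
def deg2 {V : Type*} [Fintype V] (X : SimpleGraph V) (v : V) : ℕ :=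
  (Finset.univ.filter (fun u => X.dist v u = 2)).card

/-- The leap eccentric connectivity index `Lξᶜ(X) = Σ_v d₂(v|X)·e(v|X)`. -/
def leapECI {V : Type*} [Fintype V] (X : SimpleGraph V) : ℕ :=
  ∑ v, deg2 X v * ecc X v

/-- The eccentric connectivity index `ξᶜ(X) = Σ_v d₁(v|X)·e(v|X)`. -/
def eci {V : Type*} [Fintype V] (X : SimpleGraph V) : ℕ :=
  ∑ v, deg1 X v * ecc X v

/-- The first Zagreb index `M₁(X) = Σ_v d₁(v|X)²`. -/
def zagrebM1 {V : Type*} [Fintype V] (X : SimpleGraph V) : ℕ :=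
  ∑ v, (deg1 X v) ^ 2

/-- The total eccentricity `θ(X) = Σ_v e(v|X)`. -/
def totalEcc {V : Type*} [Fintype V] (X : SimpleGraph V) : ℕ :=
  ∑ v, ecc X v

/-- The number of edges `|E(X)|`. -/
def numEdges {V : Type*} (X : SimpleGraph V) : ℕ := X.edgeSet.ncard

/-- The line graph `L(G)`, with vertex set `E(G)`: two edges of `G` are adjacent in
`L(G)` iff they are distinct and share an endpoint. -/
def lineG {V : Type*} (G : SimpleGraph V) : SimpleGraph G.edgeSet :=
  SimpleGraph.fromRel (fun e f => ∃ v, v ∈ (e : Sym2 V) ∧ v ∈ (f : Sym2 V))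

/-- The subdivision graph `S(G)`, with vertex set `V(G) ⊕ E(G)`:
`v ∈ V(G)` is adjacent to `e ∈ E(G)` iff `v` is an endpoint of `e`; no other edges. -/
def subdivG {V : Type*} (G : SimpleGraph V) : SimpleGraph (V ⊕ G.edgeSet) :=
  SimpleGraph.fromRel (fun a b => match a, b with
    | Sum.inl v, Sum.inr e => v ∈ (e : Sym2 V)
    | _, _ => False)

/-- The graph `Q(G)`, with vertex set `V(G) ⊕ E(G)`: `v ∈ V(G)` is adjacent to
`e ∈ E(G)` iff `v` is an endpoint of `e`, and distinct `e, e' ∈ E(G)` are adjacent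
iff the corresponding edges share an endpoint in `G`. -/
def qGraph {V : Type*} (G : SimpleGraph V) : SimpleGraph (V ⊕ G.edgeSet) :=
  SimpleGraph.fromRel (fun a b => match a, b with
    | Sum.inl v, Sum.inr e => v ∈ (e : Sym2 V)
    | Sum.inr e, Sum.inr f => ∃ v, v ∈ (e : Sym2 V) ∧ v ∈ (f : Sym2 V)
    | _, _ => False)

/-- The graph `R(G)`, with vertex set `V(G) ⊕ E(G)`: `v, v' ∈ V(G)` are adjacent iff
they are adjacent in `G`, and `v ∈ V(G)` is adjacent to `e ∈ E(G)` iff `v` is an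
endpoint of `e`. -/
def rGraph {V : Type*} (G : SimpleGraph V) : SimpleGraph (V ⊕ G.edgeSet) :=
  SimpleGraph.fromRel (fun a b => match a, b with
    | Sum.inl v, Sum.inl w => G.Adj v w
    | Sum.inl v, Sum.inr e => v ∈ (e : Sym2 V)
    | _, _ => False)

/-- The total graph `T(G)`, with vertex set `V(G) ⊕ E(G)`: adjacency holds iff the
corresponding elements of `G` are adjacent or incident. -/
def tGraph {V : Type*} (G : SimpleGraph V) : SimpleGraph (V ⊕ G.edgeSet) :=
  SimpleGraph.fromRel (fun a b => match a, b with
    | Sum.inl v, Sum.inl w => G.Adj v w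
    | Sum.inl v, Sum.inr e => v ∈ (e : Sym2 V)
    | Sum.inr e, Sum.inr f => ∃ v, v ∈ (e : Sym2 V) ∧ v ∈ (f : Sym2 V)
    | _, _ => False)

/-- `G` is `F`-free: no induced subgraph of `G` is isomorphic to `F`. -/
def fFree {W V : Type*} (F : SimpleGraph W) (G : SimpleGraph V) : Prop :=
  ∀ s : Set V, IsEmpty (F ≃g G.induce s)

/-- The subdivision vertex join `G ∨̇ H`: the disjoint union of `S(G)` and `H`,
joining every original vertex of `G` to every vertex of `H`. -/
def svJoin {V W : Type*} (G : SimpleGraph V) (H : SimpleGraph W) :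
    SimpleGraph ((V ⊕ G.edgeSet) ⊕ W) :=
  SimpleGraph.fromRel (fun a b => match a, b with
    | Sum.inl x, Sum.inl y => (subdivG G).Adj x y
    | Sum.inl (Sum.inl _), Sum.inr _ => True
    | Sum.inr w, Sum.inr w' => H.Adj w w'
    | _, _ => False)

/-- The subdivision edge join `G ⊻ H`: the disjoint union of `S(G)` and `H`,
joining every subdivision vertex to every vertex of `H`. -/
def seJoin {V W : Type*} (G : SimpleGraph V) (H : SimpleGraph W) :
    SimpleGraph ((V ⊕ G.edgeSet) ⊕ W) :=
  SimpleGraph.fromRel (fun a b => match a, b with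
    | Sum.inl x, Sum.inl y => (subdivG G).Adj x y
    | Sum.inl (Sum.inr _), Sum.inr _ => True
    | Sum.inr w, Sum.inr w' => H.Adj w w'
    | _, _ => False)

/-- The subdivision vertex edge join `G^S △ (H₁^V ∨ H₂^S)`: the disjoint union of
`S(G)`, `H₁` and `H₂`, joining every original vertex of `G` to every vertex of `H₁`
and every subdivision vertex to every vertex of `H₂`. -/
def sveJoin {V W₁ W₂ : Type*} (G : SimpleGraph V) (H₁ : SimpleGraph W₁)
    (H₂ : SimpleGraph W₂) : SimpleGraph ((V ⊕ G.edgeSet) ⊕ (W₁ ⊕ W₂)) :=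
  SimpleGraph.fromRel (fun a b => match a, b with
    | Sum.inl x, Sum.inl y => (subdivG G).Adj x y
    | Sum.inl (Sum.inl _), Sum.inr (Sum.inl _) => True
    | Sum.inl (Sum.inr _), Sum.inr (Sum.inr _) => True
    | Sum.inr (Sum.inl w), Sum.inr (Sum.inl w') => H₁.Adj w w'
    | Sum.inr (Sum.inr w), Sum.inr (Sum.inr w') => H₂.Adj w w'
    | _, _ => False)

/-- The double corona of a base graph `B` on `A ⊕ E'` with the graphs `H₁, H₂`:
one copy of `H₁` for each `A`-vertex, joined to it, and one copy of `H₂` for each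
`E'`-vertex, joined to it. -/
def doubleCorona {A E' W₁ W₂ : Type*} (B : SimpleGraph (A ⊕ E')) (H₁ : SimpleGraph W₁)
    (H₂ : SimpleGraph W₂) : SimpleGraph ((A ⊕ E') ⊕ (A × W₁ ⊕ E' × W₂)) :=
  SimpleGraph.fromRel (fun a b => match a, b with
    | Sum.inl x, Sum.inl y => B.Adj x y
    | Sum.inl (Sum.inl v), Sum.inr (Sum.inl p) => v = p.1
    | Sum.inl (Sum.inr e), Sum.inr (Sum.inr p) => e = p.1
    | Sum.inr (Sum.inl p), Sum.inr (Sum.inl q) => p.1 = q.1 ∧ H₁.Adj p.2 q.2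
    | Sum.inr (Sum.inr p), Sum.inr (Sum.inr q) => p.1 = q.1 ∧ H₂.Adj p.2 q.2
    | _, _ => False)

/-! ### Distances certified by a level function -/

/-- A function vanishing at `a`, changing by at most one along every edge, and decreasing by one
towards some neighbour of each vertex of positive value, is the distance from `a`: the second
condition gives the lower bound on the distance, the third one produces a walk. -/
lemma dist_eq_of_level {α : Type*} (X : SimpleGraph α) (a : α) (f : α → ℕ) (h0 : f a = 0)
    (hz : ∀ x, f x = 0 → x = a) (hlip : ∀ x y, X.Adj x y → f y ≤ f x + 1)
    (hdesc : ∀ x, f x ≠ 0 → ∃ y, X.Adj x y ∧ f x = f y + 1) (x : α) : X.dist a x = f x := by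
  have hwalk : ∀ k x, f x = k → ∃ p : X.Walk x a, p.length = k := by
    intro k
    induction k with
    | zero => intro x hx; obtain rfl := hz x hx; exact ⟨Walk.nil, rfl⟩
    | succ k ih =>
      intro x hx
      obtain ⟨y, hy, hf⟩ := hdesc x (by omega)
      obtain ⟨p, hp⟩ := ih y (by omega)
      exact ⟨Walk.cons hy p, by simp [hp]⟩
  have hlow : ∀ (x y : α) (p : X.Walk x y), f y ≤ f x + p.length := by
    intro x y p
    induction p with
    | nil => simp
    | cons h p ih => have := hlip _ _ h; simp only [Walk.length_cons]; omega
  obtain ⟨p, hp⟩ := hwalk _ x rfl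
  obtain ⟨q, hq⟩ := p.reverse.reachable.exists_walk_length_eq_dist
  have h1 := dist_le p.reverse
  have h2 := hlow _ _ q
  rw [Walk.length_reverse] at h1
  omega

lemma ecc_eq_of {α : Type*} [Fintype α] (X : SimpleGraph α) (a : α) (k : ℕ)
    (hle : ∀ x, X.dist a x ≤ k) (hex : ∃ x, X.dist a x = k) : ecc X a = k := by
  unfold ecc
  apply le_antisymm
  · exact Finset.sup_le fun x _ => hle x
  · obtain ⟨x, rfl⟩ := hex
    exact Finset.le_sup (f := fun u => X.dist a u) (Finset.mem_univ x)

/-- In a connected graph with at least two vertices, eccentricity one means being adjacent to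
every other vertex. -/
lemma ecc_eq_one_iff {V : Type*} [Fintype V] (G : SimpleGraph V) (hG : G.Connected)
    (hV : 2 ≤ Fintype.card V) (v : V) : ecc G v = 1 ↔ ∀ u, u ≠ v → G.Adj v u := by
  constructor
  · intro h u hu
    have h1 : G.dist v u ≤ 1 := by
      rw [← h]; exact Finset.le_sup (f := fun u => G.dist v u) (Finset.mem_univ u)
    have h2 := hG.pos_dist_of_ne hu.symm
    exact dist_eq_one_iff_adj.1 (by omega)
  · intro h
    apply ecc_eq_of
    · intro u
      by_cases hu : u = v
      · simp [hu]
      · exact (dist_eq_one_iff_adj.2 (h u hu)).le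
    · have : Nontrivial V := Fintype.one_lt_card_iff_nontrivial.1 (by omega)
      obtain ⟨u, hu⟩ := exists_ne v
      exact ⟨u, dist_eq_one_iff_adj.2 (h u hu)⟩

/-! ### Distances in the subdivision edge join -/

section Join

variable {V W : Type*} (G : SimpleGraph V) (H : SimpleGraph W)

@[simp] lemma seJoin_vv (v u : V) :
    ¬ (seJoin G H).Adj (Sum.inl (Sum.inl v)) (Sum.inl (Sum.inl u)) := by
  simp [seJoin, subdivG]

@[simp] lemma seJoin_ve (v : V) (e : G.edgeSet) :
    (seJoin G H).Adj (Sum.inl (Sum.inl v)) (Sum.inl (Sum.inr e)) ↔ v ∈ (e : Sym2 V) := by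
  simp [seJoin, subdivG]

@[simp] lemma seJoin_ev (v : V) (e : G.edgeSet) :
    (seJoin G H).Adj (Sum.inl (Sum.inr e)) (Sum.inl (Sum.inl v)) ↔ v ∈ (e : Sym2 V) := by
  simp [seJoin, subdivG]

@[simp] lemma seJoin_ee (e f : G.edgeSet) :
    ¬ (seJoin G H).Adj (Sum.inl (Sum.inr e)) (Sum.inl (Sum.inr f)) := by
  simp [seJoin, subdivG]

@[simp] lemma seJoin_vw (v : V) (w : W) :
    ¬ (seJoin G H).Adj (Sum.inl (Sum.inl v)) (Sum.inr w) := by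
  simp [seJoin]

@[simp] lemma seJoin_wv (v : V) (w : W) :
    ¬ (seJoin G H).Adj (Sum.inr w) (Sum.inl (Sum.inl v)) := by
  simp [seJoin]

@[simp] lemma seJoin_ew (e : G.edgeSet) (w : W) :
    (seJoin G H).Adj (Sum.inl (Sum.inr e)) (Sum.inr w) := by
  simp [seJoin]

@[simp] lemma seJoin_we (e : G.edgeSet) (w : W) :
    (seJoin G H).Adj (Sum.inr w) (Sum.inl (Sum.inr e)) := by
  simp [seJoin]

@[simp] lemma seJoin_ww (w w' : W) :
    (seJoin G H).Adj (Sum.inr w) (Sum.inr w') ↔ H.Adj w w' := by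
  simp only [seJoin, fromRel_adj, ne_eq, Sum.inr.injEq]
  constructor
  · rintro ⟨_, h | h⟩
    exacts [h, h.symm]
  · exact fun h => ⟨h.ne, Or.inl h⟩

/-- The distance in `G ⊻ H` from the original vertex `v`. -/
def levelV (v : V) : (V ⊕ G.edgeSet) ⊕ W → ℕ
  | Sum.inl (Sum.inl u) => if u = v then 0 else if G.Adj v u then 2 else 4
  | Sum.inl (Sum.inr e) => if v ∈ (e : Sym2 V) then 1 else 3
  | Sum.inr _ => 2

/-- The distance in `G ⊻ H` from the subdivision vertex `e`. -/
def levelE (e : G.edgeSet) : (V ⊕ G.edgeSet) ⊕ W → ℕ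
  | Sum.inl (Sum.inl u) => if u ∈ (e : Sym2 V) then 1 else 3
  | Sum.inl (Sum.inr f) => if f = e then 0 else 2
  | Sum.inr _ => 1

/-- The distance in `G ⊻ H` from the vertex `w` of `H`. -/
def levelW (w : W) : (V ⊕ G.edgeSet) ⊕ W → ℕ
  | Sum.inl (Sum.inl _) => 2
  | Sum.inl (Sum.inr _) => 1
  | Sum.inr w' => if w' = w then 0 else if H.Adj w w' then 1 else 2

lemma adj_of_mem_edge {e : G.edgeSet} {v u : V} (hv : v ∈ (e : Sym2 V)) (hu : u ∈ (e : Sym2 V))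
    (h : u ≠ v) : G.Adj v u := by
  have he := e.2
  rw [(Sym2.mem_and_mem_iff h.symm).1 ⟨hv, hu⟩] at he
  exact he

lemma dist_seJoin_v [Nonempty W] (hdeg : ∀ v, ∃ u, G.Adj v u) (v : V)
    (x : (V ⊕ G.edgeSet) ⊕ W) :
    (seJoin G H).dist (Sum.inl (Sum.inl v)) x = levelV G v x := by
  apply dist_eq_of_level
  · simp [levelV]
  · rintro ((u | e) | w) h <;> simp only [levelV] at h <;> (try split_ifs at h) <;> simp_all
  · rintro ((u | e) | w) ((u' | e') | w') h <;> simp only [levelV] <;>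
      try simp only [seJoin_vv, seJoin_ve, seJoin_ev, seJoin_ee, seJoin_vw, seJoin_wv] at h
    · split_ifs <;> simp_all
    · have := fun h1 => adj_of_mem_edge G (v := v) h1 h
      split_ifs <;> simp_all
    all_goals (try split_ifs) <;> omega
  · rintro ((u | e) | w) h
    · by_cases hu : u = v
      · simp [levelV, hu] at h
      · by_cases ha : G.Adj v u
        · refine ⟨Sum.inl (Sum.inr ⟨s(v, u), ha⟩), ?_⟩
          simp [levelV, hu, ha]
        · obtain ⟨t, ht⟩ := hdeg u
          have hv : v ≠ t := by rintro rfl; exact ha ht.symm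
          refine ⟨Sum.inl (Sum.inr ⟨s(u, t), ht⟩), ?_⟩
          simp [levelV, hu, ha, Ne.symm hu, hv]
    · by_cases he : v ∈ (e : Sym2 V)
      · exact ⟨Sum.inl (Sum.inl v), by simp [levelV, he]⟩
      · obtain ⟨w⟩ := ‹Nonempty W›
        exact ⟨Sum.inr w, by simp [levelV, he]⟩
    · obtain ⟨u, hu⟩ := hdeg v
      exact ⟨Sum.inl (Sum.inr ⟨s(v, u), hu⟩), by simp [levelV]⟩

lemma dist_seJoin_e [Nonempty W] (hdeg : ∀ v, ∃ u, G.Adj v u) (e : G.edgeSet)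
    (x : (V ⊕ G.edgeSet) ⊕ W) :
    (seJoin G H).dist (Sum.inl (Sum.inr e)) x = levelE G e x := by
  obtain ⟨w₀⟩ := ‹Nonempty W›
  apply dist_eq_of_level
  · simp [levelE]
  · rintro ((u | f) | w) h <;> simp only [levelE] at h <;> (try split_ifs at h) <;> simp_all
  · rintro ((u | f) | w) ((u' | f') | w') h <;> simp only [levelE] <;>
      (try simp only [seJoin_vv, seJoin_ve, seJoin_ev, seJoin_ee, seJoin_vw, seJoin_wv] at h) <;>
      (try split_ifs) <;> simp_all
  · rintro ((u | f) | w) h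
    · by_cases hu : u ∈ (e : Sym2 V)
      · exact ⟨Sum.inl (Sum.inr e), by simp [levelE, hu]⟩
      · obtain ⟨t, ht⟩ := hdeg u
        have hne : (⟨s(u, t), ht⟩ : G.edgeSet) ≠ e := by rintro rfl; simp at hu
        exact ⟨Sum.inl (Sum.inr ⟨s(u, t), ht⟩), by simp [levelE, hu, hne]⟩
    · by_cases he : f = e
      · simp [levelE, he] at h
      · exact ⟨Sum.inr w₀, by simp [levelE, he]⟩
    · exact ⟨Sum.inl (Sum.inr e), by simp [levelE]⟩

lemma dist_seJoin_w [Nonempty V] (hdeg : ∀ v, ∃ u, G.Adj v u) (w : W)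
    (x : (V ⊕ G.edgeSet) ⊕ W) :
    (seJoin G H).dist (Sum.inr w) x = levelW G H w x := by
  obtain ⟨v₀⟩ := ‹Nonempty V›
  apply dist_eq_of_level
  · simp [levelW]
  · rintro ((u | f) | w) h <;> simp only [levelW] at h <;> try split_ifs at h
    all_goals simp_all
  · rintro ((u | f) | w) ((u' | f') | w') h <;> simp only [levelW] <;>
      (try simp only [seJoin_vv, seJoin_vw, seJoin_wv, seJoin_ww] at h) <;>
      try split_ifs
    all_goals simp_all
  · rintro ((u | f) | w') h
    · obtain ⟨t, ht⟩ := hdeg u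
      exact ⟨Sum.inl (Sum.inr ⟨s(u, t), ht⟩), by simp [levelW]⟩
    · exact ⟨Sum.inr w, by simp [levelW]⟩
    · by_cases hw : w' = w
      · simp [levelW, hw] at h
      · by_cases ha : H.Adj w w'
        · exact ⟨Sum.inr w, by simp [levelW, ha, hw, ha.symm]⟩
        · obtain ⟨t, ht⟩ := hdeg v₀
          exact ⟨Sum.inl (Sum.inr ⟨s(v₀, t), ht⟩), by simp [levelW, ha, hw]⟩

end Join

/-! ### Second degrees and eccentricities in the subdivision edge join -/

section Counts

variable {V W : Type*} [Fintype V] [Fintype W] (G : SimpleGraph V) (H : SimpleGraph W)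

lemma deg2_seJoin_v [Nonempty W] (hdeg : ∀ v, ∃ u, G.Adj v u) (v : V) :
    deg2 (seJoin G H) (Sum.inl (Sum.inl v)) = deg1 G v + Fintype.card W := by
  have h1 : ∀ u, ((if u = v then 0 else if G.Adj v u then 2 else 4) = 2) ↔ G.Adj v u := by
    intro u
    split_ifs with h h' <;> simp_all
  have h2 : ∀ e : G.edgeSet, ¬ ((if v ∈ (e : Sym2 V) then 1 else 3) = 2) := by
    intro e; split_ifs <;> simp
  simp only [deg2, deg1, dist_seJoin_v G H hdeg, Finset.card_filter, Fintype.sum_sum_type, levelV,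
    h1, h2]
  simp

lemma deg2_seJoin_e [Nonempty W] (hdeg : ∀ v, ∃ u, G.Adj v u) (e : G.edgeSet) :
    deg2 (seJoin G H) (Sum.inl (Sum.inr e)) + 1 = Fintype.card G.edgeSet := by
  have h1 : ∀ u : V, ¬ ((if u ∈ (e : Sym2 V) then 1 else 3) = 2) := by
    intro e; split_ifs <;> simp
  have h2 : ∀ f : G.edgeSet, ((if f = e then 0 else 2) = 2) ↔ f ≠ e := by
    intro f; split_ifs with h <;> simp [h]
  have hpos : 0 < G.edgeSet.ncard := (Set.ncard_pos (Set.toFinite _)).2 ⟨e, e.2⟩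
  simp only [deg2, dist_seJoin_e G H hdeg, Finset.card_filter, Fintype.sum_sum_type, levelE,
    h1, h2]
  rw [← Finset.card_filter (fun f => f ≠ e), Finset.filter_ne', Finset.card_erase_of_mem (by simp)]
  simp
  omega

lemma deg2_seJoin_w [Nonempty V] (hdeg : ∀ v, ∃ u, G.Adj v u) (w : W) :
    deg2 (seJoin G H) (Sum.inr w) + deg1 H w + 1 = Fintype.card V + Fintype.card W := by
  have h1 : ∀ u, (if (if u = w then 0 else if H.Adj w u then 1 else 2) = 2 then 1 else 0)
      + (if H.Adj w u then 1 else 0) + (if u = w then 1 else 0) = 1 := by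
    intro u
    split_ifs <;> simp_all
  have h2 := Finset.sum_congr (rfl : (Finset.univ : Finset W) = Finset.univ) fun u _ => h1 u
  rw [Finset.sum_add_distrib, Finset.sum_add_distrib] at h2
  simp only [Finset.sum_ite_eq', Finset.mem_univ, if_true, Finset.sum_const, Finset.card_univ,
    smul_eq_mul, mul_one] at h2
  simp only [deg2, deg1, dist_seJoin_w G H hdeg, Finset.card_filter, Fintype.sum_sum_type, levelW]
  simp
  simp at h2
  omega

/-- A graph in which some vertex `v` is adjacent to all others and incident with every edge
is a star. -/
lemma star_of_center (v : V) (hdom : ∀ u, u ≠ v → G.Adj v u)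
    (hinc : ∀ e : G.edgeSet, v ∈ (e : Sym2 V)) :
    Nonempty (G ≃g completeBipartiteGraph (Fin 1) (Fin (Fintype.card V - 1))) := by
  have hc1 : Fintype.card {x // x = v} = Fintype.card (Fin 1) := by simp
  have hc2 : Fintype.card {x // ¬ x = v} = Fintype.card (Fin (Fintype.card V - 1)) := by
    rw [Fintype.card_subtype_compl]; simp
  let φ : V ≃ Fin 1 ⊕ Fin (Fintype.card V - 1) := (Equiv.sumCompl (fun x => x = v)).symm.trans
    (Equiv.sumCongr (Fintype.equivOfCardEq hc1) (Fintype.equivOfCardEq hc2))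
  have hl : ∀ x, (φ x).isLeft = true ↔ x = v := by
    intro x
    by_cases hx : x = v
    · simp [φ, hx]
    · simp [φ, Equiv.sumCompl_symm_apply_of_neg (p := fun x => x = v) hx, hx]
  have hr : ∀ x, (φ x).isRight = true ↔ ¬ x = v := by
    intro x
    rw [← hl, ← Sum.not_isLeft]
  refine ⟨⟨φ, ?_⟩⟩
  intro a b
  simp only [completeBipartiteGraph_adj, hl, hr]
  constructor
  · rintro (⟨rfl, h⟩ | ⟨h, rfl⟩)
    · exact hdom _ h
    · exact (hdom _ h).symm
  · intro h
    have := hinc ⟨s(a, b), h⟩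
    rcases Sym2.mem_iff.1 this with rfl | rfl
    · exact Or.inl ⟨rfl, h.ne'⟩
    · exact Or.inr ⟨h.ne, rfl⟩

/-- The eccentricity of an original vertex is `4`, unless it dominates `G`; a dominating vertex has
eccentricity `3`, because some edge avoids it when `G` is not a star. -/
lemma ecc_seJoin_v [Nonempty W] (hG : G.Connected) (hV : 2 ≤ Fintype.card V)
    (hdeg : ∀ v, ∃ u, G.Adj v u)
    (hstar : ¬ Nonempty (G ≃g completeBipartiteGraph (Fin 1) (Fin (Fintype.card V - 1))))
    (v : V) :
    ecc (seJoin G H) (Sum.inl (Sum.inl v)) + (if ecc G v = 1 then 1 else 0) = 4 := by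
  split_ifs with hd <;> rw [ecc_eq_one_iff G hG hV] at hd
  · have he : ∃ e : G.edgeSet, v ∉ (e : Sym2 V) := by
      by_contra! h
      exact hstar (star_of_center G v hd h)
    obtain ⟨e, he⟩ := he
    rw [ecc_eq_of _ _ 3]
    · intro x
      rw [dist_seJoin_v G H hdeg]
      rcases x with (u | f) | w <;> simp only [levelV]
      · have := hd u
        split_ifs <;> simp_all
      · split_ifs <;> simp
      · simp
    · exact ⟨Sum.inl (Sum.inr e), by rw [dist_seJoin_v G H hdeg]; simp [levelV, he]⟩
  · push Not at hd
    obtain ⟨u, hu, ha⟩ := hd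
    rw [ecc_eq_of _ _ 4]
    · intro x
      rw [dist_seJoin_v G H hdeg]
      rcases x with (u | f) | w <;> simp only [levelV] <;> (try split_ifs) <;> simp
    · exact ⟨Sum.inl (Sum.inl u), by rw [dist_seJoin_v G H hdeg]; simp [levelV, hu, ha]⟩

lemma ecc_seJoin_e [Nonempty W] (hV : 3 ≤ Fintype.card V) (hdeg : ∀ v, ∃ u, G.Adj v u)
    (e : G.edgeSet) : ecc (seJoin G H) (Sum.inl (Sum.inr e)) = 3 := by
  apply ecc_eq_of
  · intro x
    rw [dist_seJoin_e G H hdeg]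
    rcases x with (u | f) | w <;> simp only [levelE] <;> (try split_ifs) <;> simp
  · have : ∃ u, u ∉ (e : Sym2 V) := by
      obtain ⟨⟨a, b⟩, he⟩ := e
      have hlt : ({a, b} : Finset V).card < (Finset.univ : Finset V).card :=
        lt_of_le_of_lt Finset.card_le_two (by rw [Finset.card_univ]; omega)
      obtain ⟨u, -, hu⟩ := Finset.exists_mem_notMem_of_card_lt_card hlt
      refine ⟨u, ?_⟩
      intro h
      rcases Sym2.mem_iff.1 h with rfl | rfl <;> simp at hu
    obtain ⟨u, hu⟩ := this
    exact ⟨Sum.inl (Sum.inl u), by rw [dist_seJoin_e G H hdeg]; simp [levelE, hu]⟩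

lemma ecc_seJoin_w [Nonempty V] (hdeg : ∀ v, ∃ u, G.Adj v u) (w : W) :
    ecc (seJoin G H) (Sum.inr w) = 2 := by
  apply ecc_eq_of
  · intro x
    rw [dist_seJoin_w G H hdeg]
    rcases x with (u | f) | w <;> simp only [levelW] <;> (try split_ifs) <;> simp
  · obtain ⟨v⟩ := ‹Nonempty V›
    exact ⟨Sum.inl (Sum.inl v), by rw [dist_seJoin_w G H hdeg]; simp [levelW]⟩

lemma numEdges_eq_card : numEdges G = Fintype.card G.edgeSet := by
  rw [numEdges, ← Nat.card_coe_set_eq, Nat.card_eq_fintype_card]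

lemma sum_deg1 : ∑ v, deg1 G v = 2 * numEdges G := by
  have h1 : ∀ v, deg1 G v = G.degree v := by
    intro v
    rw [deg1, ← G.card_neighborFinset_eq_degree, G.neighborFinset_eq_filter]
  simp only [h1, G.sum_degrees_eq_twice_card_edges, numEdges]
  rw [← SimpleGraph.coe_edgeFinset, Set.ncard_coe_finset]
  congr!

/-- A dominating vertex has degree `n - 1`. -/
lemma deg1_of_ecc_one (hG : G.Connected) (hV : 2 ≤ Fintype.card V) (v : V) (h : ecc G v = 1) :
    deg1 G v + 1 = Fintype.card V := by
  rw [ecc_eq_one_iff G hG hV] at h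
  have : Finset.univ.filter (fun u => G.Adj v u) = Finset.univ.erase v := by
    ext u
    simp only [Finset.mem_filter, Finset.mem_univ, true_and, Finset.mem_erase, and_true]
    exact ⟨fun h => h.ne', h u⟩
  rw [deg1, this, Finset.card_erase_of_mem (Finset.mem_univ _), Finset.card_univ]
  omega

end Counts

theorem seJoin_leapECI_nonstar {V W : Type*} [Fintype V] [Fintype W]
    (G : SimpleGraph V) (H : SimpleGraph W)
    (hGconn : G.Connected) (hHconn : H.Connected)
    (n m n₁ m₁ : ℕ) (hn : n = Fintype.card V) (hm : m = numEdges G)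
    (hn₁ : n₁ = Fintype.card W) (hm₁ : m₁ = numEdges H) (hn3 : 3 ≤ n)
    (hstar : ¬ Nonempty (G ≃g completeBipartiteGraph (Fin 1) (Fin (n - 1)))) :
    (leapECI (seJoin G H) : ℤ) =
      (m : ℤ) * (3 * (m : ℤ) + 5) + 2 * (n₁ : ℤ) * ((n₁ : ℤ) + 3 * (n : ℤ) - 1) -
        4 * (m₁ : ℤ) - ((n : ℤ) + (n₁ : ℤ) - 1) * ({v : V | ecc G v = 1}.ncard : ℤ) := by
  subst hn hn₁ hm hm₁
  have hnontriv : Nontrivial V := Fintype.one_lt_card_iff_nontrivial.1 (by omega)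
  have hV : Nonempty V := hGconn.nonempty
  have hW : Nonempty W := hHconn.nonempty
  have hdeg : ∀ v, ∃ u, G.Adj v u := fun v => hGconn.preconnected.exists_adj_of_nontrivial v
  have h2 : 2 ≤ Fintype.card V := by omega
  have hv : ∀ v, ((deg2 (seJoin G H) (Sum.inl (Sum.inl v)) *
      ecc (seJoin G H) (Sum.inl (Sum.inl v)) : ℕ) : ℤ) =
      4 * (deg1 G v : ℤ) + 4 * (Fintype.card W : ℤ) -
        ((Fintype.card V : ℤ) + Fintype.card W - 1) * (if ecc G v = 1 then 1 else 0) := by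
    intro v
    have h := ecc_seJoin_v G H hGconn h2 hdeg hstar v
    rw [deg2_seJoin_v G H hdeg]
    split_ifs at h ⊢ with h1
    · have h3 := deg1_of_ecc_one G hGconn h2 v h1
      rw [← h3, show ecc (seJoin G H) (Sum.inl (Sum.inl v)) = 3 by omega]
      push_cast; ring
    · rw [show ecc (seJoin G H) (Sum.inl (Sum.inl v)) = 4 by omega]
      push_cast; ring
  have he : ∀ e, ((deg2 (seJoin G H) (Sum.inl (Sum.inr e)) *
      ecc (seJoin G H) (Sum.inl (Sum.inr e)) : ℕ) : ℤ) = 3 * ((numEdges G : ℤ) - 1) := by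
    intro e
    rw [ecc_seJoin_e G H hn3 hdeg, numEdges_eq_card, ← deg2_seJoin_e G H hdeg e]
    push_cast; ring
  have hw : ∀ w, ((deg2 (seJoin G H) (Sum.inr w) * ecc (seJoin G H) (Sum.inr w) : ℕ) : ℤ) =
      2 * ((Fintype.card V : ℤ) + Fintype.card W - 1) - 2 * (deg1 H w : ℤ) := by
    intro w
    have h : ((deg2 (seJoin G H) (Sum.inr w) + deg1 H w + 1 : ℕ) : ℤ) =
      ((Fintype.card V + Fintype.card W : ℕ) : ℤ) := by rw [deg2_seJoin_w G H hdeg w]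
    rw [ecc_seJoin_w G H hdeg]
    push_cast at h ⊢
    linarith
  have hdom : (∑ v : V, (if ecc G v = 1 then 1 else 0) : ℤ) = ({v : V | ecc G v = 1}.ncard : ℤ) := by
    rw [Finset.sum_boole, ← Set.ncard_coe_finset]
    simp
  have hG : (∑ v, (deg1 G v : ℤ)) = 2 * numEdges G := by exact_mod_cast sum_deg1 G
  have hH : (∑ v, (deg1 H v : ℤ)) = 2 * numEdges H := by exact_mod_cast sum_deg1 H
  rw [leapECI, Nat.cast_sum, Fintype.sum_sum_type, Fintype.sum_sum_type]
  simp only [hv, he, hw, Finset.sum_sub_distrib, Finset.sum_add_distrib, ← Finset.mul_sum, hdom,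
    hG, hH, Finset.sum_const, Finset.card_univ, nsmul_eq_mul, ← numEdges_eq_card]
  ring
end
end

section
/- Let G, H₁ and H₂ be pairwise disjoint finite simple connected graphs, where G has n ≥ 3 vertices, H₁ has n₁ vertices and m₁ edges, H₂ has n₂ vertices and m₂ edges, and suppose G is isomorphic to the star Sₙ = K_{1,n−1}. Then Lξᶜ(G^S △ (H₁^V ∨ H₂^S)) = 3(n + n₁ − 2)(n + n₁ − 1) + (n + n₂ − 1)(3n + 3n₂ − 1) − 6(m₁ + m₂). -/
/-!
Suppose that `H₁` and `H₂` are nonempty and that every vertex of `G` lies on an edge. Then any two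
vertices of `G^S △ (H₁^V ∨ H₂^S)` are at distance at most three (`dist_le_three`), and which pairs
are at distance two does not depend on the incidences in `G`:

* two vertices of `G` have a common neighbour in `H₁`, two edges of `G` have one in `H₂`,
  a vertex of `G` and a vertex of `H₂` have one among the edges, an edge and a vertex of `H₁`
  have one among the vertices of `G`, and two vertices of the same `Hᵢ` have one in `S(G)`;
* a vertex and an edge of `G`, or a vertex of `H₁` and a vertex of `H₂`, have no common neighbour.

This gives all second degrees: `n - 1 + n₂` at vertices of `G`, `|E(G)| - 1 + n₁` at edges,
`n₁ - 1 - deg + |E(G)|` on `H₁` and `n₂ - 1 - deg + n` on `H₂` (`deg2_v`, `deg2_e`, `deg2_p`,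
`deg2_q`). The eccentricity is `3` on `H₁` and `H₂`, and also at every vertex and edge of `G` that
belongs to some non-incident pair; it is `2` at a vertex lying on every edge. In a star with
at least three vertices the only vertex on every edge is the centre, no edge contains all
vertices, and `|E(G)| = n - 1`. Summing with the handshake lemma for `H₁` and `H₂` gives the formula.

In the names of the lemmas on the join, `v`, `e`, `p`, `q` stand for vertices of `G`, edges of `G`,
vertices of `H₁` and vertices of `H₂`.
-/

/-!
Definitions for the leap eccentric connectivity index of graph operations with
subdivided edges (Song–Tang).
-/

open SimpleGraph Finset
open scoped Classical

noncomputable section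

/-! ### Small distances and the handshake lemma -/

section Distance

variable {α : Type*} {X : SimpleGraph α} {a b x y : α}

lemma dist_eq_two_iff_common :
    X.dist a b = 2 ↔ a ≠ b ∧ ¬ X.Adj a b ∧ ∃ w, X.Adj a w ∧ X.Adj b w := by
  have h : X.dist a b = 2 ↔ X.edist a b = 2 := by
    unfold SimpleGraph.dist
    rw [ENat.toNat_eq_iff (by norm_num)]
    rfl
  rw [h, edist_eq_two_iff]
  rfl

lemma dist_le_three_of_adj (h₁ : X.Adj a x) (h₂ : X.Adj x y) (h₃ : X.Adj y b) :
    X.dist a b ≤ 3 :=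
  dist_le (Walk.cons h₁ (Walk.cons h₂ (Walk.cons h₃ Walk.nil)))

lemma dist_eq_three_of_adj (h₁ : X.Adj a x) (h₂ : X.Adj x y) (h₃ : X.Adj y b)
    (hne : a ≠ b) (hadj : ¬ X.Adj a b) (hcom : ∀ w, ¬ (X.Adj a w ∧ X.Adj b w)) :
    X.dist a b = 3 := by
  have hr : X.Reachable a b := ⟨Walk.cons h₁ (Walk.cons h₂ (Walk.cons h₃ Walk.nil))⟩
  have hle := dist_le_three_of_adj h₁ h₂ h₃
  have h0 : X.dist a b ≠ 0 := dist_ne_zero_iff_ne_and_reachable.2 ⟨hne, hr⟩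
  have h1 : X.dist a b ≠ 1 := fun h => hadj (dist_eq_one_iff_adj.1 h)
  have h2 : X.dist a b ≠ 2 := fun h => by
    obtain ⟨w, hw⟩ := (dist_eq_two_iff_common.1 h).2.2
    exact hcom w hw
  omega

lemma ecc_eq_of_dist [Fintype α] {k : ℕ} (hle : ∀ u, X.dist a u ≤ k) (hb : X.dist a b = k) :
    ecc X a = k := by
  refine le_antisymm (Finset.sup_le fun u _ => hle u) ?_
  rw [← hb]
  exact Finset.le_sup (f := fun u => X.dist a u) (Finset.mem_univ b)

end Distance

/-- Handshake lemma for `deg1` and `numEdges`. -/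
lemma sum_deg1_s14 {W : Type*} [Fintype W] (H : SimpleGraph W) :
    ∑ w, deg1 H w = 2 * numEdges H := by
  have h := H.sum_degrees_eq_twice_card_edges
  rw [numEdges, Set.ncard_eq_toFinset_card']
  convert h using 2 with w
  · rw [deg1, ← H.card_neighborFinset_eq_degree, H.neighborFinset_eq_filter]
  · congr 1
    ext
    simp

/-! ### Adjacency in the join -/

section Join

variable {V W₁ W₂ : Type*} {G : SimpleGraph V} {H₁ : SimpleGraph W₁} {H₂ : SimpleGraph W₂}

section Adjacency

variable (v v' : V) (e e' : G.edgeSet) (p p' : W₁) (q q' : W₂)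

@[simp] lemma adj_vv : ¬ (sveJoin G H₁ H₂).Adj (.inl (.inl v)) (.inl (.inl v')) := by
  simp [sveJoin, subdivG]
@[simp] lemma adj_ve :
    (sveJoin G H₁ H₂).Adj (.inl (.inl v)) (.inl (.inr e)) ↔ v ∈ (e : Sym2 V) := by
  simp [sveJoin, subdivG]
@[simp] lemma adj_ev :
    (sveJoin G H₁ H₂).Adj (.inl (.inr e)) (.inl (.inl v)) ↔ v ∈ (e : Sym2 V) := by
  simp [sveJoin, subdivG]
@[simp] lemma adj_ee : ¬ (sveJoin G H₁ H₂).Adj (.inl (.inr e)) (.inl (.inr e')) := by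
  simp [sveJoin, subdivG]
@[simp] lemma adj_vp : (sveJoin G H₁ H₂).Adj (.inl (.inl v)) (.inr (.inl p)) := by
  simp [sveJoin]
@[simp] lemma adj_pv : (sveJoin G H₁ H₂).Adj (.inr (.inl p)) (.inl (.inl v)) := by
  simp [sveJoin]
@[simp] lemma adj_vq : ¬ (sveJoin G H₁ H₂).Adj (.inl (.inl v)) (.inr (.inr q)) := by
  simp [sveJoin]
@[simp] lemma adj_qv : ¬ (sveJoin G H₁ H₂).Adj (.inr (.inr q)) (.inl (.inl v)) := by
  simp [sveJoin]
@[simp] lemma adj_ep : ¬ (sveJoin G H₁ H₂).Adj (.inl (.inr e)) (.inr (.inl p)) := by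
  simp [sveJoin]
@[simp] lemma adj_pe : ¬ (sveJoin G H₁ H₂).Adj (.inr (.inl p)) (.inl (.inr e)) := by
  simp [sveJoin]
@[simp] lemma adj_eq : (sveJoin G H₁ H₂).Adj (.inl (.inr e)) (.inr (.inr q)) := by
  simp [sveJoin]
@[simp] lemma adj_qe : (sveJoin G H₁ H₂).Adj (.inr (.inr q)) (.inl (.inr e)) := by
  simp [sveJoin]
@[simp] lemma adj_pp :
    (sveJoin G H₁ H₂).Adj (.inr (.inl p)) (.inr (.inl p')) ↔ H₁.Adj p p' := by
  simpa [sveJoin, H₁.adj_comm p' p] using fun h : H₁.Adj p p' => h.ne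
@[simp] lemma adj_qq :
    (sveJoin G H₁ H₂).Adj (.inr (.inr q)) (.inr (.inr q')) ↔ H₂.Adj q q' := by
  simpa [sveJoin, H₂.adj_comm q' q] using fun h : H₂.Adj q q' => h.ne
@[simp] lemma adj_pq : ¬ (sveJoin G H₁ H₂).Adj (.inr (.inl p)) (.inr (.inr q)) := by
  simp [sveJoin]
@[simp] lemma adj_qp : ¬ (sveJoin G H₁ H₂).Adj (.inr (.inr q)) (.inr (.inl p)) := by
  simp [sveJoin]

end Adjacency

lemma exists_mem_edge (e : G.edgeSet) : ∃ v, v ∈ (e : Sym2 V) := by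
  obtain ⟨e, -⟩ := e
  induction e with
  | h x y => exact ⟨x, by simp⟩

/-! ### Pairs at distance two -/

section DistanceTwo

variable (v v' : V) (e e' : G.edgeSet) (p p' : W₁) (q q' : W₂)

@[simp] lemma dist_ve : (sveJoin G H₁ H₂).dist (.inl (.inl v)) (.inl (.inr e)) ≠ 2 := by
  simp [dist_eq_two_iff_common]
@[simp] lemma dist_ev : (sveJoin G H₁ H₂).dist (.inl (.inr e)) (.inl (.inl v)) ≠ 2 := by
  simp [dist_eq_two_iff_common]
@[simp] lemma dist_vp : (sveJoin G H₁ H₂).dist (.inl (.inl v)) (.inr (.inl p)) ≠ 2 := by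
  simp [dist_eq_two_iff_common]
@[simp] lemma dist_pv : (sveJoin G H₁ H₂).dist (.inr (.inl p)) (.inl (.inl v)) ≠ 2 := by
  simp [dist_eq_two_iff_common]
@[simp] lemma dist_eq : (sveJoin G H₁ H₂).dist (.inl (.inr e)) (.inr (.inr q)) ≠ 2 := by
  simp [dist_eq_two_iff_common]
@[simp] lemma dist_qe : (sveJoin G H₁ H₂).dist (.inr (.inr q)) (.inl (.inr e)) ≠ 2 := by
  simp [dist_eq_two_iff_common]
@[simp] lemma dist_pq : (sveJoin G H₁ H₂).dist (.inr (.inl p)) (.inr (.inr q)) ≠ 2 := by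
  simp [dist_eq_two_iff_common]
@[simp] lemma dist_qp : (sveJoin G H₁ H₂).dist (.inr (.inr q)) (.inr (.inl p)) ≠ 2 := by
  simp [dist_eq_two_iff_common]

@[simp] lemma dist_vv [Nonempty W₁] :
    (sveJoin G H₁ H₂).dist (.inl (.inl v)) (.inl (.inl v')) = 2 ↔ v ≠ v' := by
  simp [dist_eq_two_iff_common]
@[simp] lemma dist_ee [Nonempty W₂] :
    (sveJoin G H₁ H₂).dist (.inl (.inr e)) (.inl (.inr e')) = 2 ↔ e ≠ e' := by
  simp [dist_eq_two_iff_common]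
@[simp] lemma dist_ep : (sveJoin G H₁ H₂).dist (.inl (.inr e)) (.inr (.inl p)) = 2 := by
  simpa [dist_eq_two_iff_common] using exists_mem_edge e
@[simp] lemma dist_pe : (sveJoin G H₁ H₂).dist (.inr (.inl p)) (.inl (.inr e)) = 2 := by
  simpa [dist_eq_two_iff_common] using exists_mem_edge e
@[simp] lemma dist_pp [Nonempty V] :
    (sveJoin G H₁ H₂).dist (.inr (.inl p)) (.inr (.inl p')) = 2 ↔ p ≠ p' ∧ ¬ H₁.Adj p p' := by
  simp [dist_eq_two_iff_common]
@[simp] lemma dist_qq [Nonempty G.edgeSet] :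
    (sveJoin G H₁ H₂).dist (.inr (.inr q)) (.inr (.inr q')) = 2 ↔ q ≠ q' ∧ ¬ H₂.Adj q q' := by
  simp [dist_eq_two_iff_common]

lemma dist_vq (hinc : ∀ v, ∃ e : G.edgeSet, v ∈ (e : Sym2 V)) :
    (sveJoin G H₁ H₂).dist (.inl (.inl v)) (.inr (.inr q)) = 2 := by
  simpa [dist_eq_two_iff_common] using hinc v
lemma dist_qv (hinc : ∀ v, ∃ e : G.edgeSet, v ∈ (e : Sym2 V)) :
    (sveJoin G H₁ H₂).dist (.inr (.inr q)) (.inl (.inl v)) = 2 := by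
  simpa [dist_eq_two_iff_common] using hinc v

end DistanceTwo

/-! ### Second degrees -/

section SecondDegree

variable [Fintype V] [Fintype W₁] [Fintype W₂]

lemma card_ne {α : Type*} [Fintype α] (a : α) :
    (Finset.univ.filter fun b => ¬ a = b).card + 1 = Fintype.card α := by
  rw [Finset.filter_not, Finset.filter_eq, if_pos (Finset.mem_univ a),
    Finset.card_sdiff_of_subset (Finset.subset_univ _), Finset.card_singleton, Finset.card_univ]
  have := Fintype.card_pos_iff.2 ⟨a⟩
  omega

lemma card_not_adj {W : Type*} [Fintype W] (H : SimpleGraph W) (w : W) :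
    (Finset.univ.filter fun u => ¬ w = u ∧ ¬ H.Adj w u).card + deg1 H w + 1 = Fintype.card W := by
  rw [← card_ne w, deg1, ← Finset.card_union_of_disjoint]
  · congr 2
    ext u
    have : H.Adj w u → ¬ w = u := fun h => h.ne
    simp only [Finset.mem_union, Finset.mem_filter, Finset.mem_univ, true_and]
    tauto
  · rw [Finset.disjoint_filter]
    tauto

/-- The second degree in the join, counted separately over the four kinds of vertices. -/
lemma deg2_eq (x : (V ⊕ G.edgeSet) ⊕ (W₁ ⊕ W₂)) :
    deg2 (sveJoin G H₁ H₂) x =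
      ((Finset.univ.filter fun v => (sveJoin G H₁ H₂).dist x (.inl (.inl v)) = 2).card +
        (Finset.univ.filter fun e => (sveJoin G H₁ H₂).dist x (.inl (.inr e)) = 2).card) +
      ((Finset.univ.filter fun p => (sveJoin G H₁ H₂).dist x (.inr (.inl p)) = 2).card +
        (Finset.univ.filter fun q => (sveJoin G H₁ H₂).dist x (.inr (.inr q)) = 2).card) := by
  simp only [deg2, Finset.card_filter, Fintype.sum_sum_type]

lemma deg2_v [Nonempty W₁] (hinc : ∀ v, ∃ e : G.edgeSet, v ∈ (e : Sym2 V)) (v : V) :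
    deg2 (sveJoin G H₁ H₂) (.inl (.inl v)) + 1 = Fintype.card V + Fintype.card W₂ := by
  rw [← card_ne v]
  simp [deg2_eq, dist_vq _ _ hinc]
  ring

lemma deg2_e [Nonempty W₂] (e : G.edgeSet) :
    deg2 (sveJoin G H₁ H₂) (.inl (.inr e)) + 1 = Fintype.card G.edgeSet + Fintype.card W₁ := by
  rw [← card_ne e]
  simp only [deg2_eq, dist_ev, dist_ee, dist_ep, dist_eq, Finset.filter_true, Finset.filter_false,
    Finset.card_empty, Finset.card_univ, ne_eq, zero_add, add_zero]
  rw [add_right_comm]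
  -- The two filters differ only in their decidability instances.
  congr!

lemma deg2_p [Nonempty V] (p : W₁) :
    deg2 (sveJoin G H₁ H₂) (.inr (.inl p)) + deg1 H₁ p + 1 =
      Fintype.card G.edgeSet + Fintype.card W₁ := by
  rw [← card_not_adj H₁ p]
  simp [deg2_eq]
  ring

lemma deg2_q [Nonempty G.edgeSet] (hinc : ∀ v, ∃ e : G.edgeSet, v ∈ (e : Sym2 V)) (q : W₂) :
    deg2 (sveJoin G H₁ H₂) (.inr (.inr q)) + deg1 H₂ q + 1 =
      Fintype.card V + Fintype.card W₂ := by
  rw [← card_not_adj H₂ q]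
  simp [deg2_eq, dist_qv _ _ hinc]
  ring

end SecondDegree

/-! ### Eccentricities -/

section Eccentricity

lemma dist_le_three [Nonempty V] [Nonempty W₁] [Nonempty W₂]
    (hinc : ∀ v, ∃ e : G.edgeSet, v ∈ (e : Sym2 V))
    (x y : (V ⊕ G.edgeSet) ⊕ (W₁ ⊕ W₂)) : (sveJoin G H₁ H₂).dist x y ≤ 3 := by
  obtain ⟨p₀⟩ := ‹Nonempty W₁›
  obtain ⟨q₀⟩ := ‹Nonempty W₂›
  obtain ⟨v₀⟩ := ‹Nonempty V›
  obtain ⟨e₀, he₀⟩ := hinc v₀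
  have of_two : ∀ {x y w}, (sveJoin G H₁ H₂).Adj x w → (sveJoin G H₁ H₂).Adj w y →
      (sveJoin G H₁ H₂).dist x y ≤ 3 := fun h h' =>
    (dist_le (Walk.cons h (Walk.cons h' Walk.nil))).trans (by simp)
  have of_one : ∀ {x y}, (sveJoin G H₁ H₂).Adj x y →
      (sveJoin G H₁ H₂).dist x y ≤ 3 := fun h =>
    (dist_le (Walk.cons h Walk.nil)).trans (by simp)
  have hve : ∀ v e, (sveJoin G H₁ H₂).dist (.inl (.inl v)) (.inl (.inr e)) ≤ 3 := fun v e => by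
    obtain ⟨e', he'⟩ := hinc v
    exact dist_le_three_of_adj ((adj_ve v e').2 he') (adj_eq e' q₀) (adj_qe e q₀)
  have hvq : ∀ v q, (sveJoin G H₁ H₂).dist (.inl (.inl v)) (.inr (.inr q)) ≤ 3 := fun v q =>
    (dist_vq v q hinc).le.trans (by simp)
  have hep : ∀ e p, (sveJoin G H₁ H₂).dist (.inl (.inr e)) (.inr (.inl p)) ≤ 3 := fun e p =>
    (dist_ep e p).le.trans (by simp)
  have hpq : ∀ p q, (sveJoin G H₁ H₂).dist (.inr (.inl p)) (.inr (.inr q)) ≤ 3 := fun p q =>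
    dist_le_three_of_adj (adj_pv v₀ p) ((adj_ve v₀ e₀).2 he₀) (adj_eq e₀ q)
  rcases x with (v | e) | (p | q) <;> rcases y with (v' | e') | (p' | q')
  · exact of_two (adj_vp v p₀) (adj_pv v' p₀)
  · exact hve v e'
  · exact of_one (adj_vp v p')
  · exact hvq v q'
  · exact dist_comm.trans_le (hve v' e)
  · exact of_two (adj_eq e q₀) (adj_qe e' q₀)
  · exact hep e p'
  · exact of_one (adj_eq e q')
  · exact of_one (adj_pv v' p)
  · exact dist_comm.trans_le (hep e' p)
  · exact of_two (adj_pv v₀ p) (adj_vp v₀ p')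
  · exact hpq p q'
  · exact dist_comm.trans_le (hvq v' q)
  · exact of_one (adj_qe e' q)
  · exact dist_comm.trans_le (hpq p' q)
  · exact of_two (adj_qe e₀ q) (adj_eq e₀ q')

lemma dist_eq_three_of_not_mem [Nonempty W₂] (hinc : ∀ v, ∃ e : G.edgeSet, v ∈ (e : Sym2 V))
    {v : V} {e : G.edgeSet} (h : v ∉ (e : Sym2 V)) :
    (sveJoin G H₁ H₂).dist (.inl (.inl v)) (.inl (.inr e)) = 3 := by
  obtain ⟨q₀⟩ := ‹Nonempty W₂›
  obtain ⟨e', he'⟩ := hinc v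
  exact dist_eq_three_of_adj ((adj_ve v e').2 he') (adj_eq e' q₀) (adj_qe e q₀)
    (by simp) (by simpa using h) (by simp)

lemma dist_eq_three_pq [Nonempty V] (hinc : ∀ v, ∃ e : G.edgeSet, v ∈ (e : Sym2 V))
    (p : W₁) (q : W₂) :
    (sveJoin G H₁ H₂).dist (.inr (.inl p)) (.inr (.inr q)) = 3 := by
  obtain ⟨v₀⟩ := ‹Nonempty V›
  obtain ⟨e₀, he₀⟩ := hinc v₀
  exact dist_eq_three_of_adj (adj_pv v₀ p) ((adj_ve v₀ e₀).2 he₀) (adj_eq e₀ q)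
    (by simp) (by simp) (by simp)

variable [Fintype V] [Fintype W₁] [Fintype W₂]

/-- A vertex of `G` on every edge has eccentricity two: it is adjacent to all edges and to all
of `H₁`, and at distance two from all other vertices. -/
lemma ecc_v_of_forall_mem [Nonempty W₁] [Nonempty W₂]
    (hinc : ∀ v, ∃ e : G.edgeSet, v ∈ (e : Sym2 V)) {c : V}
    (hc : ∀ e : G.edgeSet, c ∈ (e : Sym2 V)) : ecc (sveJoin G H₁ H₂) (.inl (.inl c)) = 2 := by
  refine ecc_eq_of_dist (fun u => ?_) (dist_vq c (Classical.arbitrary W₂) hinc)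
  rcases u with (v | e) | (p | q)
  · by_cases h : c = v
    · simp [h]
    · exact ((dist_vv c v).2 h).le
  · exact (dist_eq_one_iff_adj.2 ((adj_ve c e).2 (hc e))).le.trans (by simp)
  · exact (dist_eq_one_iff_adj.2 (adj_vp c p)).le.trans (by simp)
  · exact (dist_vq c q hinc).le

variable [Nonempty V] [Nonempty W₁] [Nonempty W₂]

lemma ecc_v (hinc : ∀ v, ∃ e : G.edgeSet, v ∈ (e : Sym2 V)) {v : V} {e : G.edgeSet}
    (h : v ∉ (e : Sym2 V)) : ecc (sveJoin G H₁ H₂) (.inl (.inl v)) = 3 :=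
  ecc_eq_of_dist (dist_le_three hinc _) (dist_eq_three_of_not_mem hinc h)

lemma ecc_e (hinc : ∀ v, ∃ e : G.edgeSet, v ∈ (e : Sym2 V)) {v : V} {e : G.edgeSet}
    (h : v ∉ (e : Sym2 V)) : ecc (sveJoin G H₁ H₂) (.inl (.inr e)) = 3 :=
  ecc_eq_of_dist (dist_le_three hinc _) (dist_comm.trans (dist_eq_three_of_not_mem hinc h))

lemma ecc_p (hinc : ∀ v, ∃ e : G.edgeSet, v ∈ (e : Sym2 V)) (p : W₁) :
    ecc (sveJoin G H₁ H₂) (.inr (.inl p)) = 3 :=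
  ecc_eq_of_dist (dist_le_three hinc _) (dist_eq_three_pq hinc p (Classical.arbitrary W₂))

lemma ecc_q (hinc : ∀ v, ∃ e : G.edgeSet, v ∈ (e : Sym2 V)) (q : W₂) :
    ecc (sveJoin G H₁ H₂) (.inr (.inr q)) = 3 :=
  ecc_eq_of_dist (dist_le_three hinc _)
    (dist_comm.trans (dist_eq_three_pq hinc (Classical.arbitrary W₁) q))

end Eccentricity

end Join

/-! ### Stars -/

section Star

variable {V : Type*} {G : SimpleGraph V}

/-- A graph isomorphic to a star has a centre `c`, and its edges are the pairs containing `c`. -/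
lemma exists_center {k : ℕ} (f : G ≃g completeBipartiteGraph (Fin 1) (Fin k)) :
    ∃ c, ∀ v w, G.Adj v w ↔ v ≠ w ∧ (v = c ∨ w = c) := by
  refine ⟨f.symm (.inl 0), fun v w => ?_⟩
  have hf : ∀ u, u = f.symm (.inl 0) ↔ f u = .inl 0 := fun u => f.toEquiv.eq_symm_apply
  rw [← f.map_adj_iff, hf, hf, ← f.injective.ne_iff]
  rcases f v with i | i <;> rcases f w with j | j <;> simp [eq_iff_true_of_subsingleton]

variable {c : V}

lemma center_mem (hc : ∀ v w, G.Adj v w ↔ v ≠ w ∧ (v = c ∨ w = c))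
    (e : G.edgeSet) : c ∈ (e : Sym2 V) := by
  obtain ⟨e, he⟩ := e
  induction e with
  | h x y =>
    have := ((hc x y).1 he).2
    simp only [Sym2.mem_iff]
    tauto

/-- The edge joining the centre of a star to a given leaf. -/
def starEdge (hc : ∀ v w, G.Adj v w ↔ v ≠ w ∧ (v = c ∨ w = c))
    (v : {v // ¬ c = v}) : G.edgeSet :=
  ⟨s(c, v), (hc c v).2 ⟨v.2, Or.inl rfl⟩⟩

lemma starEdge_bijective (hc : ∀ v w, G.Adj v w ↔ v ≠ w ∧ (v = c ∨ w = c)) :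
    Function.Bijective (starEdge hc) := by
  refine ⟨fun v w h => ?_, fun e => ?_⟩
  · have : s(c, (v : V)) = s(c, (w : V)) := congrArg Subtype.val h
    exact Subtype.ext (Sym2.congr_right.1 this)
  · obtain ⟨w, hw⟩ := center_mem hc e
    have hadj : G.Adj c w := by
      have := e.2
      rwa [hw] at this
    exact ⟨⟨w, hadj.ne⟩, Subtype.ext hw.symm⟩

lemma card_edgeSet_star [Fintype V] (hc : ∀ v w, G.Adj v w ↔ v ≠ w ∧ (v = c ∨ w = c)) :
    Fintype.card G.edgeSet + 1 = Fintype.card V := by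
  rw [← Fintype.card_of_bijective (starEdge_bijective hc), Fintype.card_subtype, card_ne]

lemma exists_not_mem_edge [Fintype V] (hc : ∀ v w, G.Adj v w ↔ v ≠ w ∧ (v = c ∨ w = c))
    (h3 : 3 ≤ Fintype.card V) (e : G.edgeSet) :
    ∃ v, v ∉ (e : Sym2 V) := by
  obtain ⟨⟨w, hw⟩, rfl⟩ := (starEdge_bijective hc).2 e
  obtain ⟨v, hv⟩ := Finset.exists_mem_notMem_of_card_lt_card
    (s := {c, w}) (t := Finset.univ) (Finset.card_le_two.trans_lt (by rw [Finset.card_univ]; omega))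
  exact ⟨v, by simpa [starEdge] using hv⟩

lemma exists_edge_not_mem [Fintype V] (hc : ∀ v w, G.Adj v w ↔ v ≠ w ∧ (v = c ∨ w = c))
    (h3 : 3 ≤ Fintype.card V) {v : V} (hv : v ≠ c) :
    ∃ e : G.edgeSet, v ∉ (e : Sym2 V) := by
  obtain ⟨w, hw⟩ := exists_not_mem_edge hc h3 (starEdge hc ⟨v, hv.symm⟩)
  simp only [starEdge, Sym2.mem_iff, not_or] at hw
  exact ⟨starEdge hc ⟨w, Ne.symm hw.1⟩, by simp [starEdge, hv, Ne.symm hw.2]⟩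

end Star

theorem sveJoin_leapECI_star {V W₁ W₂ : Type*} [Fintype V] [Fintype W₁] [Fintype W₂]
    (G : SimpleGraph V) (H₁ : SimpleGraph W₁) (H₂ : SimpleGraph W₂)
    (hGconn : G.Connected) (hH₁conn : H₁.Connected) (hH₂conn : H₂.Connected)
    (n n₁ n₂ m₁ m₂ : ℕ) (hn : n = Fintype.card V)
    (hn₁ : n₁ = Fintype.card W₁) (hm₁ : m₁ = numEdges H₁)
    (hn₂ : n₂ = Fintype.card W₂) (hm₂ : m₂ = numEdges H₂) (hn3 : 3 ≤ n)
    (hstar : Nonempty (G ≃g completeBipartiteGraph (Fin 1) (Fin (n - 1)))) :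
    (leapECI (sveJoin G H₁ H₂) : ℤ) =
      3 * ((n : ℤ) + (n₁ : ℤ) - 2) * ((n : ℤ) + (n₁ : ℤ) - 1) +
        ((n : ℤ) + (n₂ : ℤ) - 1) * (3 * (n : ℤ) + 3 * (n₂ : ℤ) - 1) -
        6 * ((m₁ : ℤ) + (m₂ : ℤ)) := by
  obtain ⟨f⟩ := hstar
  obtain ⟨c, hc⟩ := exists_center f
  have : Nonempty V := hGconn.nonempty
  have : Nonempty W₁ := hH₁conn.nonempty
  have : Nonempty W₂ := hH₂conn.nonempty
  have hE := card_edgeSet_star hc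
  have : Nonempty G.edgeSet := Fintype.card_pos_iff.1 (by omega)
  have hinc : ∀ v, ∃ e : G.edgeSet, v ∈ (e : Sym2 V) := fun v => by
    by_cases hv : c = v
    · exact ⟨Classical.arbitrary _, hv ▸ center_mem hc _⟩
    · exact ⟨starEdge hc ⟨v, hv⟩, by simp [starEdge]⟩
  have h3 : 3 ≤ Fintype.card V := hn ▸ hn3
  have sV : ∑ v, (deg2 (sveJoin G H₁ H₂) (.inl (.inl v)) * ecc (sveJoin G H₁ H₂) (.inl (.inl v)) : ℤ)
      = (n + n₂ - 1) * 2 + (n - 1) * ((n + n₂ - 1) * 3) := by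
    have hd : ∀ v, (deg2 (sveJoin G H₁ H₂) (.inl (.inl v)) : ℤ) = n + n₂ - 1 := fun v => by
      have := deg2_v (H₁ := H₁) (H₂ := H₂) hinc v
      omega
    rw [← Finset.add_sum_erase _ _ (Finset.mem_univ c), ecc_v_of_forall_mem hinc (center_mem hc), hd,
      Finset.sum_congr rfl (g := fun _ => ((n + n₂ - 1) * 3 : ℤ)) fun v hv => ?_]
    · have hcard : ((Finset.univ.erase c).card : ℤ) = n - 1 := by
        rw [Finset.card_erase_of_mem (Finset.mem_univ c), Finset.card_univ]
        omega
      rw [Finset.sum_const, nsmul_eq_mul, hcard]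
      rfl
    · obtain ⟨e, he⟩ := exists_edge_not_mem hc h3 (Finset.ne_of_mem_erase hv)
      rw [hd, ecc_v hinc he]
      rfl
  have sE : ∑ e, (deg2 (sveJoin G H₁ H₂) (.inl (.inr e)) * ecc (sveJoin G H₁ H₂) (.inl (.inr e)) : ℤ)
      = (n - 1) * ((n + n₁ - 2) * 3) := by
    rw [Finset.sum_congr rfl (g := fun _ => ((n + n₁ - 2) * 3 : ℤ)) fun e _ => ?_]
    · rw [Finset.sum_const, nsmul_eq_mul, Finset.card_univ, hn, ← hE]
      push_cast
      ring
    · obtain ⟨v, hv⟩ := exists_not_mem_edge hc h3 e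
      have := deg2_e (H₁ := H₁) (H₂ := H₂) e
      rw [ecc_e hinc hv]
      push_cast
      omega
  have sP : ∑ p, (deg2 (sveJoin G H₁ H₂) (.inr (.inl p)) * ecc (sveJoin G H₁ H₂) (.inr (.inl p)) : ℤ)
      = n₁ * ((n + n₁ - 2) * 3) - 6 * m₁ := by
    rw [Finset.sum_congr rfl (g := fun p => ((n + n₁ - 2) * 3 - 3 * deg1 H₁ p : ℤ)) fun p _ => ?_]
    · rw [Finset.sum_sub_distrib, Finset.sum_const, ← Finset.mul_sum, ← Nat.cast_sum, sum_deg1_s14,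
        nsmul_eq_mul, Finset.card_univ, hn₁, hm₁]
      push_cast
      ring
    · have := deg2_p (G := G) (H₁ := H₁) (H₂ := H₂) p
      rw [ecc_p hinc]
      push_cast
      omega
  have sQ : ∑ q, (deg2 (sveJoin G H₁ H₂) (.inr (.inr q)) * ecc (sveJoin G H₁ H₂) (.inr (.inr q)) : ℤ)
      = n₂ * ((n + n₂ - 1) * 3) - 6 * m₂ := by
    rw [Finset.sum_congr rfl (g := fun q => ((n + n₂ - 1) * 3 - 3 * deg1 H₂ q : ℤ)) fun q _ => ?_]
    · rw [Finset.sum_sub_distrib, Finset.sum_const, ← Finset.mul_sum, ← Nat.cast_sum, sum_deg1_s14,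
        nsmul_eq_mul, Finset.card_univ, hn₂, hm₂]
      push_cast
      ring
    · have := deg2_q (H₁ := H₁) (H₂ := H₂) hinc q
      rw [ecc_q hinc]
      push_cast
      omega
  rw [leapECI, Nat.cast_sum]
  simp only [Nat.cast_mul, Fintype.sum_sum_type]
  rw [sV, sE, sP, sQ]
  ring
end
end
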